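/- arXiv:0905.2617 — 5 statements merged into one kernel-verified Lean document; each statement's English description precedes it below -/
import Mathlib

section
/- Let C > 0 and let ρ : ℝ → ℝ be a function which is positive and differentiable on [0,∞) and satisfies 0 ≤ ρ'(r) ≤ C·ρ(r)² for all r ≥ 0. Then there exists a constant c with 0 < c < 1 such that c·ρ(r + c/ρ(r)) ≤ ρ(r) for all r ≥ 0. -/
/-!
Dividing `ρ' ≤ C ρ²` by `ρ²` says that `(1 / ρ)' ≥ -C`, so `1 / ρ` drops by at most `C c / ρ r` on
`[r, r + c / ρ r]`. What is left, `(1 - C c) / ρ r`, is at least `c / ρ r` once `c (1 + C) ≤ 1`.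
-/

section RiccatiInequality

variable {D : Set ℝ} {f : ℝ → ℝ} {C c x y : ℝ}

theorem inv_sub_mul_le_inv_of_deriv_le_mul_sq (hD : Convex ℝ D) (hcont : ContinuousOn f D)
    (hdiff : DifferentiableOn ℝ f (interior D)) (hne : ∀ z ∈ D, f z ≠ 0)
    (hderiv : ∀ z ∈ interior D, deriv f z ≤ C * f z ^ 2) (hx : x ∈ D) (hy : y ∈ D) (hxy : x ≤ y) :
    (f x)⁻¹ - C * (y - x) ≤ (f y)⁻¹ := by
  have hne' : ∀ z ∈ interior D, f z ≠ 0 := fun z hz ↦ hne z (interior_subset hz)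
  have neg_le_deriv_inv : ∀ z ∈ interior D, -C ≤ deriv (fun t ↦ (f t)⁻¹) z := by
    intro z hz
    have hfz : DifferentiableAt ℝ f z := hdiff.differentiableAt (isOpen_interior.mem_nhds hz)
    rw [deriv_fun_inv'' hfz (hne' z hz), le_div_iff₀ (sq_pos_of_ne_zero (hne' z hz))]
    linarith [hderiv z hz]
  have mean_value : -C * (y - x) ≤ (f y)⁻¹ - (f x)⁻¹ :=
    hD.mul_sub_le_image_sub_of_le_deriv (hcont.inv₀ hne) (hdiff.fun_inv hne') neg_le_deriv_inv
      x hx y hy hxy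
  linarith

theorem mul_apply_add_div_le_of_deriv_le_mul_sq (hD : Convex ℝ D) (hcont : ContinuousOn f D)
    (hdiff : DifferentiableOn ℝ f (interior D)) (hpos : ∀ z ∈ D, 0 < f z)
    (hderiv : ∀ z ∈ interior D, deriv f z ≤ C * f z ^ 2) (hc : 0 ≤ c) (hcC : c * (1 + C) ≤ 1)
    (hx : x ∈ D) (hy : x + c / f x ∈ D) :
    c * f (x + c / f x) ≤ f x := by
  have hfx : 0 < f x := hpos x hx
  have hxy : x ≤ x + c / f x := le_add_of_nonneg_right (by positivity)
  have div_le_inv : c / f x ≤ (f (x + c / f x))⁻¹ :=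
    calc c / f x ≤ (1 - C * c) / f x := by gcongr; linarith
      _ = (f x)⁻¹ - C * (x + c / f x - x) := by ring
      _ ≤ (f (x + c / f x))⁻¹ :=
        inv_sub_mul_le_inv_of_deriv_le_mul_sq hD hcont hdiff (fun z hz ↦ (hpos z hz).ne') hderiv
          hx hy hxy
  rwa [div_le_iff₀ hfx, inv_mul_eq_div, le_div_iff₀ (hpos _ hy)] at div_le_inv

end RiccatiInequality

theorem ssp_remark_growth_condition_general (C : ℝ) (ρ : ℝ → ℝ)
    (hpos : ∀ r, 0 ≤ r → 0 < ρ r)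
    (hdiff : DifferentiableOn ℝ ρ (Set.Ici 0))
    (hderiv : ∀ r, 0 ≤ r → derivWithin ρ (Set.Ici 0) r ≤ C * (ρ r) ^ 2) :
    ∃ c : ℝ, 0 < c ∧ c < 1 ∧ ∀ r, 0 ≤ r → c * ρ (r + c / ρ r) ≤ ρ r := by
  have hderiv_interior : ∀ r ∈ interior (Set.Ici 0), deriv ρ r ≤ C * ρ r ^ 2 := by
    intro r hr
    rw [← derivWithin_of_mem_nhds (mem_interior_iff_mem_nhds.mp hr)]
    exact hderiv r (interior_subset hr)
  have hcC : (2 + |C|)⁻¹ * (1 + C) ≤ 1 :=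
    inv_mul_le_one_of_le₀ (by linarith [le_abs_self C]) (by positivity)
  refine ⟨(2 + |C|)⁻¹, by positivity, inv_lt_one_of_one_lt₀ (by linarith [abs_nonneg C]), ?_⟩
  intro r hr
  have hρr : 0 < ρ r := hpos r hr
  have hmem : 0 ≤ r + (2 + |C|)⁻¹ / ρ r := by positivity
  exact mul_apply_add_div_le_of_deriv_le_mul_sq (convex_Ici 0) hdiff.continuousOn
    (hdiff.mono interior_subset) hpos hderiv_interior (by positivity) hcC hr hmem

/-- Remark after Theorem 7.1: the differential inequality `0 ≤ ρ' ≤ C ρ²` on `[0,∞)`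
is sufficient for the growth condition (7.2). -/
theorem ssp_remark_growth_condition (C : ℝ) (hC : 0 < C) (ρ : ℝ → ℝ)
    (hpos : ∀ r, 0 ≤ r → 0 < ρ r)
    (hdiff : DifferentiableOn ℝ ρ (Set.Ici 0))
    (hderiv : ∀ r, 0 ≤ r →
      0 ≤ derivWithin ρ (Set.Ici 0) r ∧
        derivWithin ρ (Set.Ici 0) r ≤ C * (ρ r) ^ 2) :
    ∃ c : ℝ, 0 < c ∧ c < 1 ∧ ∀ r, 0 ≤ r → c * ρ (r + c / ρ r) ≤ ρ r :=
  ssp_remark_growth_condition_general C ρ hpos hdiff fun r hr ↦ (hderiv r hr).2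
end

section
/- Let C > 0 and let ρ : ℝ → ℝ be a function which is positive and differentiable on [0,∞) and satisfies 0 ≤ ρ'(r) ≤ C·ρ(r)² for all r ≥ 0. Then for every r ≥ 0 and every δ > 0 one has ρ(r + δ/ρ(r)) ≤ ρ(r)·exp( C·δ·ρ(r + δ/ρ(r)) / ρ(r) ). -/
/-! The inequality `ρ' ≤ C ρ²` says that `-1/ρ` has derivative at most `C`. By the mean value
inequality over `[r, r + δ/ρ(r)]`, the ratio `X = ρ(r + δ/ρ(r)) / ρ(r)` satisfies
`X ≤ 1 + C δ X`, and `1 + t ≤ exp t` concludes. -/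

open Set

theorem inv_sub_inv_le_of_deriv_le_mul_sq {D : Set ℝ} (hD : Convex ℝ D) {C : ℝ} {ρ : ℝ → ℝ}
    (hcont : ContinuousOn ρ D) (hdiff : DifferentiableOn ℝ ρ (interior D))
    (hne : ∀ x ∈ D, ρ x ≠ 0) (hderiv : ∀ x ∈ interior D, deriv ρ x ≤ C * ρ x ^ 2)
    {a b : ℝ} (ha : a ∈ D) (hb : b ∈ D) (hab : a ≤ b) :
    (ρ a)⁻¹ - (ρ b)⁻¹ ≤ C * (b - a) := by
  have hasDerivAt_neg_inv : ∀ x ∈ interior D,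
      HasDerivAt (fun y ↦ -(ρ y)⁻¹) (deriv ρ x / ρ x ^ 2) x := fun x hx ↦ by
    have hρ := (hdiff.differentiableAt (isOpen_interior.mem_nhds hx)).hasDerivAt
    simpa only [neg_div, neg_neg] using (hρ.fun_inv (hne x (interior_subset hx))).fun_neg
  have deriv_neg_inv_le : ∀ x ∈ interior D, deriv (fun y ↦ -(ρ y)⁻¹) x ≤ C := fun x hx ↦ by
    rw [(hasDerivAt_neg_inv x hx).deriv,
      div_le_iff₀ (sq_pos_of_ne_zero (hne x (interior_subset hx)))]
    exact hderiv x hx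
  have mean_value : -(ρ b)⁻¹ - -(ρ a)⁻¹ ≤ C * (b - a) :=
    hD.image_sub_le_mul_sub_of_deriv_le (hcont.inv₀ hne).neg
      (fun x hx ↦ (hasDerivAt_neg_inv x hx).differentiableAt.differentiableWithinAt)
      deriv_neg_inv_le a ha b hb hab
  linarith

theorem le_mul_exp_of_inv_sub_inv_le {x y t : ℝ} (hx : 0 < x) (hy : 0 < y)
    (h : x⁻¹ - y⁻¹ ≤ t) : y ≤ x * Real.exp (t * y) := by
  have ratio_le : y / x ≤ t * y + 1 :=
    calc y / x = (x⁻¹ - y⁻¹) * y + 1 := by field_simp; ring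
      _ ≤ t * y + 1 := by gcongr
  rw [← div_le_iff₀' hx]
  exact ratio_le.trans (Real.add_one_le_exp _)

theorem ssp_remark_gronwall_general {D : Set ℝ} (hD : Convex ℝ D) {C : ℝ} {ρ : ℝ → ℝ}
    (hcont : ContinuousOn ρ D) (hdiff : DifferentiableOn ℝ ρ (interior D))
    (hpos : ∀ x ∈ D, 0 < ρ x) (hderiv : ∀ x ∈ interior D, deriv ρ x ≤ C * ρ x ^ 2)
    {r δ : ℝ} (hr : r ∈ D) (hδ : 0 ≤ δ) (hrδ : r + δ / ρ r ∈ D) :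
    ρ (r + δ / ρ r) ≤ ρ r * Real.exp (C * δ * ρ (r + δ / ρ r) / ρ r) := by
  have inv_sub_inv_le : (ρ r)⁻¹ - (ρ (r + δ / ρ r))⁻¹ ≤ C * (δ / ρ r) := by
    simpa only [add_sub_cancel_left] using
      inv_sub_inv_le_of_deriv_le_mul_sq hD hcont hdiff (fun x hx ↦ (hpos x hx).ne') hderiv hr hrδ
        (le_add_of_nonneg_right (div_nonneg hδ (hpos r hr).le))
  convert le_mul_exp_of_inv_sub_inv_le (hpos r hr) (hpos _ hrδ) inv_sub_inv_le using 3
  ring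

/-- Grönwall-type estimate from the Remark after Theorem 7.1:
if `0 ≤ ρ' ≤ C ρ²` on `[0,∞)`, then `ρ(r + δ/ρ(r)) ≤ ρ(r) · exp(C δ ρ(r + δ/ρ(r))/ρ(r))`. -/
theorem ssp_remark_gronwall (C : ℝ) (hC : 0 < C) (ρ : ℝ → ℝ)
    (hpos : ∀ r, 0 ≤ r → 0 < ρ r)
    (hdiff : DifferentiableOn ℝ ρ (Set.Ici 0))
    (hderiv : ∀ r, 0 ≤ r →
      0 ≤ derivWithin ρ (Set.Ici 0) r ∧
        derivWithin ρ (Set.Ici 0) r ≤ C * (ρ r) ^ 2) :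
    ∀ r, 0 ≤ r → ∀ δ, 0 < δ →
      ρ (r + δ / ρ r) ≤ ρ r * Real.exp (C * δ * ρ (r + δ / ρ r) / ρ r) := by
  have deriv_le : ∀ x ∈ interior (Ici 0), deriv ρ x ≤ C * ρ x ^ 2 := fun x hx ↦ by
    rw [← derivWithin_of_mem_nhds (mem_interior_iff_mem_nhds.mp hx)]
    exact (hderiv x (interior_subset hx)).2
  exact fun r hr δ hδ ↦ ssp_remark_gronwall_general (convex_Ici 0) hdiff.continuousOn
    (hdiff.mono interior_subset) hpos deriv_le hr hδ.le
    (add_nonneg hr (div_nonneg hδ.le (hpos r hr).le))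
end

section
/- Let ρ : [0,∞) → (0,∞) be continuous, nondecreasing and unbounded, and let c ∈ (0,1) satisfy c·ρ(r + c/ρ(r)) ≤ ρ(r) for all r ≥ 0. Put b = c^{-2}, and for each integer j with ρ(0) < b^j set r_j = sup{ r ≥ 0 : ρ(r) ≤ b^j }. Then for every such integer k one has ρ(r_k) = b^k and r_k + c·b^{-k} < r_{k+1}. -/
/-!
On the closed ray `[0, ∞)` the set `{ρ ≤ M}` is closed and bounded, so its supremum belongs to it,
and by the intermediate value theorem `ρ` equals `M` there. Applied at the last point `r` with
`ρ r = M`, the growth condition gives `ρ (r + c / M) ≤ c⁻¹ * M`. If `c⁻¹ * M < N`, then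
`r + c / M` therefore lies strictly before the last point at which `ρ` equals `N`. For `M = b ^ k`
and `N = b ^ (k + 1)` with `b = c⁻²`, the requirement `c⁻¹ * M < N` says `c < 1`.
-/

open Set

theorem bddAbove_setOf_le_of_monotoneOn_Ici {α β : Type*} [LinearOrder α] [Preorder β]
    {f : α → β} {a : α} {M : β} (hf : MonotoneOn f (Ici a))
    (hM : ∃ y ∈ Ici a, M < f y) : BddAbove {x | a ≤ x ∧ f x ≤ M} := by
  obtain ⟨y, hay, hMy⟩ := hM
  exact ⟨y, fun x hx ↦ (hf.reflect_lt hx.1 hay (hx.2.trans_lt hMy)).le⟩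

section LevelPoint

variable {α β : Type*} [ConditionallyCompleteLinearOrder α] [LinearOrder β]
  {f : α → β} {a x : α} {M : β}

/-- The last point of the ray `[a, ∞)` at which `f` is at most `M`; for `f = ρ` and `a = 0` it is
the level radius `r_j` at `M = b ^ j`. It is meaningful only if the set is nonempty and bounded
above, since otherwise `sSup` takes a default value. -/
noncomputable def levelPoint (f : α → β) (a : α) (M : β) : α :=
  sSup {x | a ≤ x ∧ f x ≤ M}

variable [TopologicalSpace α] [OrderTopology α] [TopologicalSpace β] [OrderClosedTopology β]

theorem levelPoint_mem (hcont : ContinuousOn f (Ici a)) (hf : MonotoneOn f (Ici a))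
    (ha : f a ≤ M) (hM : ∃ y ∈ Ici a, M < f y) :
    levelPoint f a M ∈ {x | a ≤ x ∧ f x ≤ M} := by
  have hclosed : IsClosed {x | a ≤ x ∧ f x ≤ M} :=
    hcont.preimage_isClosed_of_isClosed isClosed_Ici isClosed_Iic
  exact hclosed.csSup_mem ⟨a, le_rfl, ha⟩ (bddAbove_setOf_le_of_monotoneOn_Ici hf hM)

variable [DenselyOrdered α]

theorem apply_levelPoint (hcont : ContinuousOn f (Ici a)) (hf : MonotoneOn f (Ici a))
    (ha : f a ≤ M) (hM : ∃ y ∈ Ici a, M < f y) : f (levelPoint f a M) = M := by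
  obtain ⟨hmem, hle⟩ := levelPoint_mem hcont hf ha hM
  obtain ⟨y, hay, hMy⟩ := hM
  obtain ⟨z, ⟨haz, -⟩, rfl⟩ :=
    intermediate_value_Icc hay (hcont.mono Icc_subset_Ici_self) ⟨ha, hMy.le⟩
  have hz : z ≤ levelPoint f a (f z) :=
    le_csSup (bddAbove_setOf_le_of_monotoneOn_Ici hf ⟨y, hay, hMy⟩) ⟨haz, le_rfl⟩
  exact hle.antisymm (hf haz hmem hz)

theorem lt_levelPoint_of_apply_lt (hcont : ContinuousOn f (Ici a)) (hf : MonotoneOn f (Ici a))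
    (hM : ∃ y ∈ Ici a, M < f y) (hx : a ≤ x) (hxM : f x < M) : x < levelPoint f a M := by
  have ha : f a ≤ M := (hf self_mem_Ici hx hx).trans hxM.le
  refine hf.reflect_lt hx (levelPoint_mem hcont hf ha hM).1 ?_
  rwa [apply_levelPoint hcont hf ha hM]

end LevelPoint

theorem levelPoint_add_div_lt_levelPoint {f : ℝ → ℝ} {a c M N : ℝ}
    (hcont : ContinuousOn f (Ici a)) (hf : MonotoneOn f (Ici a))
    (hunb : ∀ L, ∃ y ∈ Ici a, L < f y) (hgrow : ∀ r ∈ Ici a, c * f (r + c / f r) ≤ f r)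
    (hc : 0 < c) (hM : 0 < M) (ha : f a ≤ M) (hMN : M < c * N) :
    levelPoint f a M + c / M < levelPoint f a N := by
  have hr : a ≤ levelPoint f a M := (levelPoint_mem hcont hf ha (hunb M)).1
  have hgrow_level : c * f (levelPoint f a M + c / M) ≤ M := by
    simpa only [apply_levelPoint hcont hf ha (hunb M)] using hgrow _ hr
  exact lt_levelPoint_of_apply_lt hcont hf (hunb N) (le_add_of_le_of_nonneg hr (by positivity))
    (lt_of_mul_lt_mul_left (hgrow_level.trans_lt hMN) hc.le)

theorem zpow_lt_mul_zpow_add_one {K : Type*} [Field K] [LinearOrder K] [IsStrictOrderedRing K]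
    {b c : K} (hb : 0 < b) (hcb : 1 < c * b) (k : ℤ) :
    b ^ k < c * b ^ (k + 1) :=
  calc
    b ^ k < (c * b) * b ^ k := lt_mul_of_one_lt_left (zpow_pos hb k) hcb
    _ = c * b ^ (k + 1) := by rw [zpow_add_one₀ hb.ne']; ring

/-- Properties of the level radii `r_k` in the proof of Theorem 7.1: with `b = c^{-2}` and
`r_j = sup{ r ≥ 0 : ρ(r) ≤ b^j }`, one has `ρ(r_k) = b^k` and `r_k + c·b^{-k} < r_{k+1}`
whenever `ρ(0) < b^k`. -/
theorem level_radii_properties (ρ : ℝ → ℝ) (c : ℝ)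
    (hcont : ContinuousOn ρ (Set.Ici 0))
    (hpos : ∀ r, 0 ≤ r → 0 < ρ r)
    (hmono : ∀ r s, 0 ≤ r → r ≤ s → ρ r ≤ ρ s)
    (hunb : ∀ M : ℝ, ∃ r, 0 ≤ r ∧ M < ρ r)
    (hc0 : 0 < c) (hc1 : c < 1)
    (hgrow : ∀ r, 0 ≤ r → c * ρ (r + c / ρ r) ≤ ρ r)
    (b : ℝ) (hb : b = (c ^ 2)⁻¹)
    (rlev : ℤ → ℝ)
    (hrlev : ∀ j : ℤ, ρ 0 < b ^ j →
      rlev j = sSup {r : ℝ | 0 ≤ r ∧ ρ r ≤ b ^ j}) :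
    ∀ k : ℤ, ρ 0 < b ^ k →
      ρ (rlev k) = b ^ k ∧ rlev k + c * b ^ (-k) < rlev (k + 1) := by
  intro k hk
  have hmonoOn : MonotoneOn ρ (Ici 0) := fun r hr s _ hrs ↦ hmono r s hr hrs
  have hb1 : 1 < b := hb ▸ (one_lt_inv₀ (by positivity)).2 (pow_lt_one₀ hc0.le hc1 two_ne_zero)
  have hb0 : 0 < b := zero_lt_one.trans hb1
  have hcb : 1 < c * b := by
    have hcb_eq : c * b = c⁻¹ := by rw [hb]; field_simp
    exact hcb_eq ▸ (one_lt_inv₀ hc0).2 hc1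
  have hk_succ : ρ 0 < b ^ (k + 1) := hk.trans (zpow_lt_zpow_right₀ hb1 (lt_add_one k))
  have hlev : rlev k = levelPoint ρ 0 (b ^ k) := hrlev k hk
  have hlev_succ : rlev (k + 1) = levelPoint ρ 0 (b ^ (k + 1)) := hrlev (k + 1) hk_succ
  rw [hlev, hlev_succ, zpow_neg, ← div_eq_mul_inv]
  exact ⟨apply_levelPoint hcont hmonoOn hk.le (hunb _),
    levelPoint_add_div_lt_levelPoint hcont hmonoOn hunb hgrow hc0 (zpow_pos hb0 k) hk.le
      (zpow_lt_mul_zpow_add_one hb0 hcb k)⟩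
end

section
/- Let ρ : [0,∞) → (0,∞) be continuous and nondecreasing, let c ∈ (0,1) satisfy c·ρ(r + c/ρ(r)) ≤ ρ(r) for all r ≥ 0, and assume ∫₁^∞ dr/ρ(r) < ∞. Then there exist a constant C > 0 and a continuously differentiable nondecreasing function ρ̃ : [0,∞) → (0,∞) such that C^{-1} ≤ ρ̃(r)/ρ(r) ≤ C and 0 ≤ ρ̃'(r) ≤ C·ρ(r)² for all r ≥ 0. -/
/-!
Extend `ρ` to a function `g` on the line, constant on `(-∞, 0]`, and let `ρ̃` solve
`ρ̃' = g * (g - ρ̃)`, `ρ̃ 0 = g 0`: in the time scale `dτ = g dr`, the function `ρ̃` relaxes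
exponentially towards `g`. As `g` is nondecreasing, `ρ̃` stays below it, hence is nondecreasing with
`ρ̃' ≤ g²`. Conversely, on an interval `[a, r]` the function `ρ̃` recovers at least the fraction
`1 - exp (-∫ₐʳ g)` of `g a`. If `r = a + c / g a`, this fraction is at least `1 - exp (-c)`, while
`g a ≥ c * g r` by the growth condition.
-/

open Set Real intervalIntegral

/-- The solution of the linear equation `F' = p * (q - F)` with `F 0 = q 0`, given by variation of
constants: a quantity relaxing towards the target `q` at rate `p`. -/
noncomputable def relaxation (p q : ℝ → ℝ) (r : ℝ) : ℝ :=
  exp (-∫ x in 0..r, p x) * (q 0 + ∫ x in 0..r, exp (∫ y in 0..x, p y) * (p x * q x))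

section Relaxation

variable {p q : ℝ → ℝ} {a r : ℝ}

@[simp]
lemma relaxation_zero (p q : ℝ → ℝ) : relaxation p q 0 = q 0 := by
  simp [relaxation]

lemma hasDerivAt_exp_integral (hp : Continuous p) (a s : ℝ) :
    HasDerivAt (fun r ↦ exp (∫ x in a..r, p x)) (exp (∫ x in a..s, p x) * p s) s :=
  (hp.integral_hasStrictDerivAt a s).hasDerivAt.exp

lemma continuous_exp_integral (hp : Continuous p) (a : ℝ) :
    Continuous fun r ↦ exp (∫ x in a..r, p x) :=
  continuous_iff_continuousAt.2 fun s ↦ (hasDerivAt_exp_integral hp a s).continuousAt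

lemma hasDerivAt_relaxation (hp : Continuous p) (hq : Continuous q) (r : ℝ) :
    HasDerivAt (relaxation p q) (p r * (q r - relaxation p q r)) r := by
  have hsource : Continuous fun x ↦ exp (∫ y in 0..x, p y) * (p x * q x) :=
    (continuous_exp_integral hp 0).mul (hp.mul hq)
  have hdecay : HasDerivAt (fun r ↦ exp (-∫ x in 0..r, p x))
      (exp (-∫ x in 0..r, p x) * -p r) r :=
    (hp.integral_hasStrictDerivAt 0 r).hasDerivAt.fun_neg.exp
  have hcancel : exp (-∫ x in 0..r, p x) * exp (∫ x in 0..r, p x) = 1 := by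
    rw [← exp_add, neg_add_cancel, exp_zero]
  refine (hdecay.mul ((hsource.integral_hasStrictDerivAt 0 r).hasDerivAt.const_add
    (q 0))).congr_deriv ?_
  rw [relaxation]
  linear_combination (p r * q r) * hcancel

lemma continuous_relaxation (hp : Continuous p) (hq : Continuous q) :
    Continuous (relaxation p q) :=
  continuous_iff_continuousAt.2 fun r ↦ (hasDerivAt_relaxation hp hq r).continuousAt

lemma deriv_relaxation (hp : Continuous p) (hq : Continuous q) :
    deriv (relaxation p q) = fun r ↦ p r * (q r - relaxation p q r) :=
  funext fun r ↦ (hasDerivAt_relaxation hp hq r).deriv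

lemma exp_integral_mul_relaxation_sub (hp : Continuous p) (hq : Continuous q) (a r m : ℝ) :
    exp (∫ x in a..r, p x) * (relaxation p q r - m) =
      relaxation p q a - m + ∫ s in a..r, exp (∫ x in a..s, p x) * (p s * (q s - m)) := by
  have hderiv (s : ℝ) : HasDerivAt (fun r ↦ exp (∫ x in a..r, p x) * (relaxation p q r - m))
      (exp (∫ x in a..s, p x) * (p s * (q s - m))) s :=
    ((hasDerivAt_exp_integral hp a s).mul
      ((hasDerivAt_relaxation hp hq s).sub_const m)).congr_deriv (by ring)
  have hcont : Continuous fun s ↦ exp (∫ x in a..s, p x) * (p s * (q s - m)) :=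
    (continuous_exp_integral hp a).mul (hp.mul (hq.sub continuous_const))
  rw [integral_eq_sub_of_hasDerivAt (fun s _ ↦ hderiv s) (hcont.intervalIntegrable a r)]
  simp

lemma relaxation_le (hp : Continuous p) (hq : Continuous q) (hp0 : ∀ x, 0 ≤ p x)
    (hqm : Monotone q) (hr : 0 ≤ r) : relaxation p q r ≤ q r := by
  have hsource : ∫ s in 0..r, exp (∫ x in 0..s, p x) * (p s * (q s - q r)) ≤ 0 := by
    rw [← neg_nonneg, ← integral_neg]
    exact integral_nonneg hr fun s hs ↦ neg_nonneg.2 <|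
      mul_nonpos_of_nonneg_of_nonpos (exp_pos _).le
        (mul_nonpos_of_nonneg_of_nonpos (hp0 s) (sub_nonpos.2 (hqm hs.2)))
  have hduhamel := exp_integral_mul_relaxation_sub hp hq 0 r (q r)
  rw [relaxation_zero] at hduhamel
  have hneg : exp (∫ x in 0..r, p x) * (relaxation p q r - q r) ≤ 0 := by
    linarith [hqm hr]
  exact sub_nonpos.1 (nonpos_of_mul_nonpos_right hneg (exp_pos _))

lemma monotoneOn_relaxation (hp : Continuous p) (hq : Continuous q) (hp0 : ∀ x, 0 ≤ p x)
    (hqm : Monotone q) : MonotoneOn (relaxation p q) (Ici 0) := by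
  refine monotoneOn_of_hasDerivWithinAt_nonneg (convex_Ici 0)
    (continuous_relaxation hp hq).continuousOn
    (fun r _ ↦ (hasDerivAt_relaxation hp hq r).hasDerivWithinAt) fun r hr ↦ ?_
  exact mul_nonneg (hp0 r) (sub_nonneg.2 (relaxation_le hp hq hp0 hqm (interior_subset hr)))

lemma apply_zero_le_relaxation (hp : Continuous p) (hq : Continuous q) (hp0 : ∀ x, 0 ≤ p x)
    (hqm : Monotone q) (hr : 0 ≤ r) : q 0 ≤ relaxation p q r := by
  simpa using monotoneOn_relaxation hp hq hp0 hqm self_mem_Ici hr hr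

lemma one_sub_exp_mul_le_relaxation (hp : Continuous p) (hq : Continuous q)
    (hp0 : ∀ x, 0 ≤ p x) (hqm : Monotone q) (hq0 : 0 ≤ q 0) (ha : 0 ≤ a) (har : a ≤ r) :
    (1 - exp (-∫ x in a..r, p x)) * q a ≤ relaxation p q r := by
  have hsource : 0 ≤ ∫ s in a..r, exp (∫ x in a..s, p x) * (p s * (q s - q a)) :=
    integral_nonneg har fun s hs ↦
      mul_nonneg (exp_pos _).le (mul_nonneg (hp0 s) (sub_nonneg.2 (hqm hs.1)))
  have hstart : 0 ≤ relaxation p q a := hq0.trans (apply_zero_le_relaxation hp hq hp0 hqm ha)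
  have hduhamel := exp_integral_mul_relaxation_sub hp hq a r (q a)
  have hlower : -q a ≤ (relaxation p q r - q a) * exp (∫ x in a..r, p x) := by linarith
  have hdiv : -q a * exp (-∫ x in a..r, p x) ≤ relaxation p q r - q a := by
    rwa [exp_neg, mul_inv_le_iff₀ (exp_pos _)]
  linarith

end Relaxation

section Growth

variable {g : ℝ → ℝ} {a c r : ℝ}

lemma one_sub_exp_neg_pos (hc : 0 < c) : 0 < 1 - exp (-c) :=
  sub_pos.2 (exp_lt_one_iff.2 (neg_neg_of_pos hc))

lemma le_integral_add_div (hg : Continuous g) (hgm : Monotone g) (hc : 0 ≤ c)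
    (hga : 0 < g a) : c ≤ ∫ x in a..a + c / g a, g x := by
  have hle : a ≤ a + c / g a := le_add_of_nonneg_right (by positivity)
  calc c = ∫ _ in a..a + c / g a, g a := by
        rw [integral_const, smul_eq_mul, add_sub_cancel_left, div_mul_cancel₀ c hga.ne']
    _ ≤ ∫ x in a..a + c / g a, g x :=
        integral_mono_on hle intervalIntegrable_const (hg.intervalIntegrable _ _)
          fun x hx ↦ hgm hx.1

lemma exists_add_div_eq (hg : Continuous g) (hpos : ∀ x, 0 < g x) (hc : 0 ≤ c)
    (h0 : c / g 0 ≤ r) : ∃ a, 0 ≤ a ∧ a + c / g a = r := by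
  have hr : 0 ≤ r := (div_nonneg hc (hpos 0).le).trans h0
  have hcont : Continuous fun a ↦ a + c / g a :=
    continuous_id.add (continuous_const.div hg fun x ↦ (hpos x).ne')
  obtain ⟨a, ha, har⟩ := intermediate_value_Icc hr hcont.continuousOn
    ⟨by simpa using h0, le_add_of_nonneg_right (div_nonneg hc (hpos r).le)⟩
  exact ⟨a, ha.1, har⟩

lemma mul_le_relaxation_self_of_growth (hg : Continuous g) (hgm : Monotone g)
    (hpos : ∀ x, 0 < g x) (hc : 0 < c) (hgrow : ∀ r, 0 ≤ r → c * g (r + c / g r) ≤ g r)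
    (hr : 0 ≤ r) : (1 - exp (-c)) * c * g r ≤ relaxation g g r := by
  have hg0 (x : ℝ) : 0 ≤ g x := (hpos x).le
  rw [mul_assoc]
  rcases le_total r (c / g 0) with hsmall | hlarge
  · have hgr : c * g r ≤ g 0 :=
      (mul_le_mul_of_nonneg_left (hgm hsmall) hc.le).trans (by simpa using hgrow 0 le_rfl)
    calc (1 - exp (-c)) * (c * g r)
        ≤ c * g r := mul_le_of_le_one_left (mul_nonneg hc.le (hg0 r))
          (sub_le_self _ (exp_pos _).le)
      _ ≤ g 0 := hgr
      _ ≤ relaxation g g r := apply_zero_le_relaxation hg hg hg0 hgm hr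
  · obtain ⟨a, ha, rfl⟩ := exists_add_div_eq hg hpos hc.le hlarge
    calc (1 - exp (-c)) * (c * g (a + c / g a))
        ≤ (1 - exp (-c)) * g a := mul_le_mul_of_nonneg_left (hgrow a ha)
          (one_sub_exp_neg_pos hc).le
      _ ≤ (1 - exp (-∫ x in a..a + c / g a, g x)) * g a := by
          gcongr
          · exact hg0 a
          · exact le_integral_add_div hg hgm hc.le (hpos a)
      _ ≤ relaxation g g (a + c / g a) :=
          one_sub_exp_mul_le_relaxation hg hg hg0 hgm (hg0 0) ha
            (le_add_of_nonneg_right (div_nonneg hc.le (hg0 a)))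

lemma relaxation_self_bounds_of_growth (hg : Continuous g) (hgm : Monotone g)
    (hpos : ∀ x, 0 < g x) (hc : 0 < c) (hgrow : ∀ r, 0 ≤ r → c * g (r + c / g r) ≤ g r)
    (hr : 0 ≤ r) :
    (1 - exp (-c)) * c ≤ relaxation g g r / g r ∧
      relaxation g g r / g r ≤ ((1 - exp (-c)) * c)⁻¹ ∧
      0 ≤ deriv (relaxation g g) r ∧
      deriv (relaxation g g) r ≤ ((1 - exp (-c)) * c)⁻¹ * g r ^ 2 := by
  have hg0 (x : ℝ) : 0 ≤ g x := (hpos x).le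
  have hk : 0 < (1 - exp (-c)) * c := mul_pos (one_sub_exp_neg_pos hc) hc
  have hF0 : 0 ≤ relaxation g g r := (hg0 0).trans (apply_zero_le_relaxation hg hg hg0 hgm hr)
  have hFle : relaxation g g r ≤ g r := relaxation_le hg hg hg0 hgm hr
  have hlower : (1 - exp (-c)) * c ≤ relaxation g g r / g r :=
    (le_div_iff₀ (hpos r)).2 (mul_le_relaxation_self_of_growth hg hgm hpos hc hgrow hr)
  have hupper : relaxation g g r / g r ≤ 1 := div_le_one_of_le₀ hFle (hg0 r)
  have hC : 1 ≤ ((1 - exp (-c)) * c)⁻¹ := (one_le_inv₀ hk).2 (hlower.trans hupper)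
  rw [deriv_relaxation hg hg]
  refine ⟨hlower, hupper.trans hC, mul_nonneg (hg0 r) (sub_nonneg.2 hFle), ?_⟩
  calc g r * (g r - relaxation g g r)
      ≤ g r * g r := mul_le_mul_of_nonneg_left (sub_le_self _ hF0) (hg0 r)
    _ = g r ^ 2 := (sq (g r)).symm
    _ ≤ ((1 - exp (-c)) * c)⁻¹ * g r ^ 2 := le_mul_of_one_le_left (sq_nonneg _) hC

end Growth

lemma exists_continuous_monotone_pos_extension {ρ : ℝ → ℝ} (hcont : ContinuousOn ρ (Ici 0))
    (hmono : MonotoneOn ρ (Ici 0)) (hpos : ∀ r, 0 ≤ r → 0 < ρ r) :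
    ∃ g : ℝ → ℝ, Continuous g ∧ Monotone g ∧ (∀ x, 0 < g x) ∧ EqOn g ρ (Ici 0) :=
  ⟨fun x ↦ ρ (max x 0), hcont.comp_continuous (by fun_prop) fun x ↦ le_max_right x 0,
    fun _ _ hxy ↦ hmono (mem_Ici.2 (le_max_right _ _)) (mem_Ici.2 (le_max_right _ _))
      (max_le_max_right 0 hxy),
    fun x ↦ hpos _ (le_max_right x 0), fun _ hx ↦ congrArg ρ (max_eq_left hx)⟩

theorem regularized_function_construction_general (ρ : ℝ → ℝ) (c : ℝ)
    (hcont : ContinuousOn ρ (Set.Ici 0))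
    (hpos : ∀ r, 0 ≤ r → 0 < ρ r)
    (hmono : ∀ r s, 0 ≤ r → r ≤ s → ρ r ≤ ρ s)
    (hc0 : 0 < c)
    (hgrow : ∀ r, 0 ≤ r → c * ρ (r + c / ρ r) ≤ ρ r) :
    ∃ C : ℝ, 0 < C ∧ ∃ ρt : ℝ → ℝ,
      (∀ r, 0 ≤ r → 0 < ρt r) ∧
      (∀ r, 0 ≤ r → DifferentiableAt ℝ ρt r) ∧
      ContinuousOn (deriv ρt) (Set.Ici 0) ∧
      (∀ r s, 0 ≤ r → r ≤ s → ρt r ≤ ρt s) ∧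
      (∀ r, 0 ≤ r → C⁻¹ ≤ ρt r / ρ r ∧ ρt r / ρ r ≤ C ∧
        0 ≤ deriv ρt r ∧ deriv ρt r ≤ C * (ρ r) ^ 2) := by
  obtain ⟨g, hg, hgm, hgpos, hgρ⟩ :=
    exists_continuous_monotone_pos_extension hcont (fun r hr s _ hrs ↦ hmono r s hr hrs) hpos
  have hg0 (x : ℝ) : 0 ≤ g x := (hgpos x).le
  have hggrow (r : ℝ) (hr : 0 ≤ r) : c * g (r + c / g r) ≤ g r := by
    have hshift : 0 ≤ r + c / g r := add_nonneg hr (div_nonneg hc0.le (hg0 r))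
    rw [hgρ hshift, hgρ hr]
    exact hgrow r hr
  have hFmono := monotoneOn_relaxation hg hg hg0 hgm
  refine ⟨((1 - exp (-c)) * c)⁻¹, inv_pos.2 (mul_pos (one_sub_exp_neg_pos hc0) hc0),
    relaxation g g,
    fun r hr ↦ (hgpos 0).trans_le (apply_zero_le_relaxation hg hg hg0 hgm hr),
    fun r _ ↦ (hasDerivAt_relaxation hg hg r).differentiableAt, ?_,
    fun r s hr hrs ↦ hFmono hr (hr.trans hrs) hrs, fun r hr ↦ ?_⟩
  · rw [deriv_relaxation hg hg]
    exact (hg.mul (hg.sub (continuous_relaxation hg hg))).continuousOn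
  · rw [← hgρ hr, inv_inv]
    exact relaxation_self_bounds_of_growth hg hgm hgpos hc0 hggrow hr

/-- The regularized-function construction (7.4) in the proof of Theorem 7.1:
from a positive continuous nondecreasing `ρ` satisfying the growth condition (7.2)
and `∫₁^∞ dr/ρ(r) < ∞`, one constructs a `C¹` nondecreasing `ρ̃` comparable to `ρ`
with `0 ≤ ρ̃' ≤ C ρ²`. -/
theorem regularized_function_construction (ρ : ℝ → ℝ) (c : ℝ)
    (hcont : ContinuousOn ρ (Set.Ici 0))
    (hpos : ∀ r, 0 ≤ r → 0 < ρ r)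
    (hmono : ∀ r s, 0 ≤ r → r ≤ s → ρ r ≤ ρ s)
    (hc0 : 0 < c) (hc1 : c < 1)
    (hgrow : ∀ r, 0 ≤ r → c * ρ (r + c / ρ r) ≤ ρ r)
    (hint : MeasureTheory.IntegrableOn (fun r => (ρ r)⁻¹) (Set.Ioi 1)) :
    ∃ C : ℝ, 0 < C ∧ ∃ ρt : ℝ → ℝ,
      (∀ r, 0 ≤ r → 0 < ρt r) ∧
      (∀ r, 0 ≤ r → DifferentiableAt ℝ ρt r) ∧
      ContinuousOn (deriv ρt) (Set.Ici 0) ∧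
      (∀ r s, 0 ≤ r → r ≤ s → ρt r ≤ ρt s) ∧
      (∀ r, 0 ≤ r → C⁻¹ ≤ ρt r / ρ r ∧ ρt r / ρ r ≤ C ∧
        0 ≤ deriv ρt r ∧ deriv ρt r ≤ C * (ρ r) ^ 2) :=
  regularized_function_construction_general ρ c hcont hpos hmono hc0 hgrow
end

section
/- Let λ₀ > 0, α > 0, C > 0, and let h : ℝ → [0,∞) be measurable with h(τ) = 0 for τ ≤ 0 and h(τ) ≤ C·e^{−α/τ} for 0 < τ < 1, and suppose that for every δ with 0 < δ < 1 there exists a constant C_δ ≥ 1 such that C_δ^{-1}·e^{−λ₀ τ} ≤ h(τ) ≤ C_δ·e^{−λ₀ τ} for all τ ≥ δ. Then there is no Borel measure ν on ℝ, supported in (−∞, 0), such that e^{−λ₀ t} = ∫_ℝ h(t − s) dν(s) for all t < 0. -/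
open MeasureTheory

/-!
Tilting by the exponential, `dμ(s) = e^{λ₀ s} dν(s)` and `g(τ) = e^{λ₀ τ} h(τ)`, turns the
representation into `∫ g(t - s) dμ(s) = 1`, where `g` vanishes on `(-∞, 0]`, is bounded, and is
bounded below by a positive constant far out. The lower bound makes `μ` finite near `-∞`, so
`μ (-∞, t] → 0` as `t → -∞`. But `∫ g(t - s) dμ(s) ≤ K μ (-∞, t]`, so the integral tends to `0`.
-/

open Filter Set Topology
open scoped ENNReal

theorem tendsto_measure_Iic_atBot_zero {X : Type*} [MeasurableSpace X] [Preorder X]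
    [NoBotOrder X] [(atBot : Filter X).IsCountablyGenerated]
    [TopologicalSpace X] [ClosedIicTopology X] [OpensMeasurableSpace X]
    {μ : Measure X} {a : X} (ha : μ (Iic a) ≠ ∞) :
    Tendsto (fun t => μ (Iic t)) atBot (𝓝 0) := by
  have hempty : ⋂ t : X, Iic t = ∅ :=
    eq_empty_iff_forall_notMem.2 fun x hx => not_isBot x (mem_iInter.1 hx)
  have hlim := tendsto_measure_iInter_atBot (μ := μ) (s := fun t : X => Iic t)
    (fun _ => measurableSet_Iic.nullMeasurableSet) (fun _ _ => Iic_subset_Iic.2) ⟨a, ha⟩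
  rwa [hempty, measure_empty] at hlim

section Convolution

variable {G : Type*} [AddCommGroup G] [LinearOrder G] [IsOrderedAddMonoid G] [MeasurableSpace G]
  {μ : Measure G} {g : G → ℝ≥0∞} {c K : ℝ≥0∞} {T : G}

theorem lintegral_sub_le_mul_measure_Iic (hzero : ∀ τ < 0, g τ = 0) (hupper : ∀ τ, g τ ≤ K)
    (t : G) : ∫⁻ s, g (t - s) ∂μ ≤ K * μ (Iic t) := by
  refine le_trans (lintegral_mono fun s => ?_) (lintegral_indicator_const_le (Iic t) K)
  by_cases hs : s ≤ t
  · simpa [hs] using hupper (t - s)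
  · simp [hzero (t - s) (sub_neg.2 (not_le.1 hs))]

variable [TopologicalSpace G] [ClosedIicTopology G] [OpensMeasurableSpace G]

theorem mul_measure_Iic_sub_le_lintegral_sub (hlower : ∀ τ, T ≤ τ → c ≤ g τ) (t : G) :
    c * μ (Iic (t - T)) ≤ ∫⁻ s, g (t - s) ∂μ := by
  rw [← lintegral_indicator_const measurableSet_Iic]
  exact lintegral_mono fun s => indicator_apply_le (f := fun _ => c) (g := fun s => g (t - s))
    fun hs => hlower _ (le_sub_comm.1 hs)

theorem tendsto_lintegral_sub_atBot_zero [Nontrivial G] [(atBot : Filter G).IsCountablyGenerated]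
    (hc : c ≠ 0) (hK : K ≠ ∞) (hzero : ∀ τ < 0, g τ = 0) (hupper : ∀ τ, g τ ≤ K)
    (hlower : ∀ τ, T ≤ τ → c ≤ g τ) {t₀ : G} (hfin : ∫⁻ s, g (t₀ - s) ∂μ ≠ ∞) :
    Tendsto (fun t => ∫⁻ s, g (t - s) ∂μ) atBot (𝓝 0) := by
  have hμ : μ (Iic (t₀ - T)) ≠ ∞ :=
    (ENNReal.lt_top_of_mul_ne_top_right
      (ne_top_of_le_ne_top hfin (mul_measure_Iic_sub_le_lintegral_sub hlower t₀)) hc).ne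
  have hlim : Tendsto (fun t => K * μ (Iic t)) atBot (𝓝 0) := by
    simpa using ENNReal.Tendsto.const_mul (tendsto_measure_Iic_atBot_zero hμ) (.inr hK)
  exact tendsto_of_tendsto_of_tendsto_of_le_of_le tendsto_const_nhds hlim
    (fun _ => zero_le) (lintegral_sub_le_mul_measure_Iic hzero hupper)

end Convolution

theorem lintegral_exp_mul_sub_withDensity_exp (lam : ℝ) (h : ℝ → ℝ≥0∞) (ν : Measure ℝ) (t : ℝ) :
    ∫⁻ s, ENNReal.ofReal (Real.exp (lam * (t - s))) * h (t - s)
        ∂ν.withDensity (fun s => ENNReal.ofReal (Real.exp (lam * s))) =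
      ENNReal.ofReal (Real.exp (lam * t)) * ∫⁻ s, h (t - s) ∂ν := by
  rw [lintegral_withDensity_eq_lintegral_mul_non_measurable _ (by fun_prop)
      (.of_forall fun _ => ENNReal.ofReal_lt_top),
    ← lintegral_const_mul' _ _ ENNReal.ofReal_ne_top]
  refine lintegral_congr fun s => ?_
  rw [Pi.mul_apply, ← mul_assoc, ← ENNReal.ofReal_mul (Real.exp_pos _).le, ← Real.exp_add]
  ring_nf

theorem exists_forall_pos_le_mul_exp {h : ℝ → ℝ} {lam δ C D : ℝ}
    (hnear : ∀ τ, 0 < τ → τ < δ → h τ ≤ C)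
    (hfar : ∀ τ, δ ≤ τ → h τ ≤ D * Real.exp (-lam * τ)) :
    ∃ K, ∀ τ, 0 < τ → h τ ≤ K * Real.exp (-lam * τ) := by
  refine ⟨max D (|C| * Real.exp (|lam| * δ)), fun τ hτ => ?_⟩
  rcases lt_or_ge τ δ with hτδ | hδτ
  · have hexp : 1 ≤ Real.exp (|lam| * δ + -lam * τ) := by
      have : lam * τ ≤ |lam| * δ := by gcongr; exact le_abs_self lam
      exact Real.one_le_exp (by linarith)
    calc h τ ≤ |C| := (hnear τ hτ hτδ).trans (le_abs_self C)
      _ ≤ |C| * Real.exp (|lam| * δ + -lam * τ) := le_mul_of_one_le_right (abs_nonneg C) hexp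
      _ = |C| * Real.exp (|lam| * δ) * Real.exp (-lam * τ) := by rw [Real.exp_add, mul_assoc]
      _ ≤ _ := by gcongr; exact le_max_right _ _
  · exact (hfar τ hδτ).trans (by gcongr; exact le_max_left _ _)

theorem no_representing_measure_for_ground_state_general {lam c K T : ℝ} {h : ℝ → ℝ} (hc : 0 < c)
    (hzero : ∀ τ ≤ 0, h τ = 0)
    (hupper : ∀ τ, 0 < τ → h τ ≤ K * Real.exp (-lam * τ))
    (hlower : ∀ τ, T ≤ τ → c * Real.exp (-lam * τ) ≤ h τ) :
    ¬ ∃ ν : Measure ℝ, ∀ᶠ t in atBot,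
      ENNReal.ofReal (Real.exp (-lam * t)) = ∫⁻ s, ENNReal.ofReal (h (t - s)) ∂ν := by
  rintro ⟨ν, hν⟩
  let μ := ν.withDensity fun s => ENNReal.ofReal (Real.exp (lam * s))
  let g : ℝ → ℝ≥0∞ := fun τ => ENNReal.ofReal (Real.exp (lam * τ)) * ENNReal.ofReal (h τ)
  have exp_mul_cancel (a τ : ℝ) : Real.exp (lam * τ) * (a * Real.exp (-lam * τ)) = a := by
    rw [mul_left_comm, ← Real.exp_add, neg_mul, add_neg_cancel, Real.exp_zero, mul_one]
  have hgzero : ∀ τ ≤ 0, g τ = 0 := fun τ hτ => by simp [g, hzero τ hτ]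
  have hgupper (τ : ℝ) : g τ ≤ ENNReal.ofReal K := by
    rcases le_or_gt τ 0 with hτ | hτ
    · simp [hgzero τ hτ]
    · rw [← exp_mul_cancel K τ, ENNReal.ofReal_mul (Real.exp_pos _).le]
      dsimp only [g]
      gcongr
      exact hupper τ hτ
  have hglower (τ : ℝ) (hτ : T ≤ τ) : ENNReal.ofReal c ≤ g τ := by
    rw [← exp_mul_cancel c τ, ENNReal.ofReal_mul (Real.exp_pos _).le]
    dsimp only [g]
    gcongr
    exact hlower τ hτ
  have hone : ∀ᶠ t in atBot, ∫⁻ s, g (t - s) ∂μ = 1 := by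
    filter_upwards [hν] with t ht
    rw [lintegral_exp_mul_sub_withDensity_exp lam (fun τ => ENNReal.ofReal (h τ)), ← ht,
      ← ENNReal.ofReal_mul (Real.exp_pos _).le, ← one_mul (Real.exp (-lam * t)), exp_mul_cancel,
      ENNReal.ofReal_one]
  obtain ⟨t₀, ht₀⟩ := hone.exists
  have hlim := tendsto_lintegral_sub_atBot_zero (ENNReal.ofReal_pos.2 hc).ne' ENNReal.ofReal_ne_top
    (fun τ hτ => hgzero τ hτ.le) hgupper hglower (ht₀ ▸ ENNReal.one_ne_top)
  exact zero_ne_one (tendsto_nhds_unique (hlim.congr' hone) tendsto_const_nhds)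

/-- Analytic core of Lemma 6.3: a function `h` vanishing on `(−∞,0]`, dominated by
`C e^{−α/τ}` near `0` and two-sidedly comparable to `e^{−λ₀ τ}` away from `0`, cannot
represent `e^{−λ₀ t}` as `∫ h(t−s) dν(s)` for a Borel measure `ν` supported in
`(−∞,0)`. -/
theorem no_representing_measure_for_ground_state
    (lam0 α C : ℝ) (hlam : 0 < lam0) (hα : 0 < α) (hC : 0 < C)
    (h : ℝ → ℝ) (hm : Measurable h) (hnn : ∀ τ, 0 ≤ h τ)
    (hzero : ∀ τ : ℝ, τ ≤ 0 → h τ = 0)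
    (hsmall : ∀ τ : ℝ, 0 < τ → τ < 1 → h τ ≤ C * Real.exp (-α / τ))
    (hcomp : ∀ δ : ℝ, 0 < δ → δ < 1 → ∃ Cδ : ℝ, 1 ≤ Cδ ∧ ∀ τ : ℝ, δ ≤ τ →
      Cδ⁻¹ * Real.exp (-lam0 * τ) ≤ h τ ∧ h τ ≤ Cδ * Real.exp (-lam0 * τ)) :
    ¬ ∃ ν : Measure ℝ, ν (Set.Ici 0) = 0 ∧
      ∀ t : ℝ, t < 0 →
        ENNReal.ofReal (Real.exp (-lam0 * t)) =
          ∫⁻ s, ENNReal.ofReal (h (t - s)) ∂ν := by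
  rintro ⟨ν, -, hν⟩
  obtain ⟨D, hD, hcompD⟩ := hcomp (1 / 2) (by norm_num) (by norm_num)
  have hnear (τ : ℝ) (hτ : 0 < τ) (hτ' : τ < 1 / 2) : h τ ≤ C :=
    (hsmall τ hτ (by linarith)).trans <| mul_le_of_le_one_right hC.le <|
      Real.exp_le_one_iff.2 <| div_nonpos_of_nonpos_of_nonneg (neg_nonpos.2 hα.le) hτ.le
  obtain ⟨K, hK⟩ := exists_forall_pos_le_mul_exp hnear fun τ hτ => (hcompD τ hτ).2
  exact no_representing_measure_for_ground_state_general (inv_pos.2 (by linarith)) hzero hK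
    (fun τ hτ => (hcompD τ hτ).1) ⟨ν, (eventually_lt_atBot 0).mono hν⟩
end
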